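/- Example of limit domination without domination: Let g : [0,1] → [0,1] be a C^r (r ≥ 1) increasing function with g(0) = 0, g'(0) = 1/2, g(1) = 1, g'(1) = 1/2, g(1/2) = 1/2, g'(1/2) = (3+√5)/2, g(x) < x for x ∈ (0,1/2) and g(x) > x for x ∈ (1/2,1), regarded as a circle map; let h : T^2 → T^2 be the hyperbolic torus automorphism (y,z) ↦ (2y+z, y+z), and let f = g × h : T^3 → T^3. Let TT^3 = E_1 ⊕ E_2 ⊕ E_3 be the natural continuous Df-invariant splitting, where E_2, E_3 are the stable and unstable bundles of h (with exponents log((3−√5)/2) and log((3+√5)/2)) and E_1 is the g-direction. Set E^s = E_1 ⊕ E_2 and E^u = E_3. Then E^s ⊕ E^u is a continuous Df-invariant splitting of TT^3 over all of T^3 which is (1, log((3+√5)^{1/2}))-limit-dominated over T^3 ∖ ({1/2} × T^2), but is not limit-dominated at any point of {1/2} × T^2; moreover the maximal f-invariant set admitting domination is {0} × T^2, and the product measure μ = δ_0 × m (δ_0 the Dirac measure at 0 ∈ S^1, m the Lebesgue measure on T^2) is a hyperbolic ergodic measure of f with the three nonzero Lyapunov exponents −log 2, −log((3+√5)/2) and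 log((3+√5)/2). -/

import Mathlib

open Filter Finset MeasureTheory

noncomputable section

/-- The (derivative) cocycle of `A` over `f`: `cocN f A n x = Dfⁿ_x = A(fⁿ⁻¹x) ∘ ⋯ ∘ A(x)`. -/
def cocN {M V : Type*} [NormedAddCommGroup V] [NormedSpace ℝ V]
    (f : M ≃ M) (A : M → (V ≃L[ℝ] V)) : ℕ → M → (V ≃L[ℝ] V)
  | 0, _ => ContinuousLinearEquiv.refl ℝ V
  | (n+1), x => (cocN f A n x).trans (A ((⇑f)^[n] x))

/-- Operator norm of `T` restricted to the subspace `W`. -/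
def opNormOn {V : Type*} [NormedAddCommGroup V] [NormedSpace ℝ V]
    (T : V →L[ℝ] V) (W : Submodule ℝ V) : ℝ :=
  sSup ((fun v => ‖T v‖) '' {v : V | v ∈ W ∧ ‖v‖ = 1})

/-- Minimal norm (co-norm) of `T` restricted to the subspace `W`. -/
def minNormOn {V : Type*} [NormedAddCommGroup V] [NormedSpace ℝ V]
    (T : V →L[ℝ] V) (W : Submodule ℝ V) : ℝ :=
  sInf ((fun v => ‖T v‖) '' {v : V | v ∈ W ∧ ‖v‖ = 1})

/-- The splitting `E ⊕ F` is `(S,λ)`-limit-dominated on `Δ`. -/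
def LimitDominated {M V : Type*} [NormedAddCommGroup V] [NormedSpace ℝ V]
    (f : M ≃ M) (A : M → (V ≃L[ℝ] V))
    (E F : M → Submodule ℝ V) (Δ : Set M) (S : ℕ) (lam : ℝ) : Prop :=
  ∀ x ∈ Δ, Filter.limsup (fun l : ℕ =>
    Real.log (opNormOn ((cocN f A S ((⇑f)^[l*S] x) : V →L[ℝ] V)) (E ((⇑f)^[l*S] x))
      / minNormOn ((cocN f A S ((⇑f)^[l*S] x) : V →L[ℝ] V)) (F ((⇑f)^[l*S] x))))
    Filter.atTop ≤ -(2*lam)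

/-- The canonical representative in `[0,1)` of a point of the circle `ℝ/ℤ`. -/
def liftc (x : UnitAddCircle) : ℝ :=
  letI : Fact ((0:ℝ) < 1) := ⟨zero_lt_one⟩
  ↑(AddCircle.equivIco 1 0 x)

/-- The circle map induced by `g : [0,1] → [0,1]` (with `g 0 = 0`, `g 1 = 1`). -/
def gbar (g : ℝ → ℝ) (x : UnitAddCircle) : UnitAddCircle :=
  ((g (liftc x) : ℝ) : UnitAddCircle)

/-- The three-torus `T³ = S¹ × T²`. -/
abbrev Torus3 : Type := UnitAddCircle × UnitAddCircle × UnitAddCircle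

/-- `ℝ³`, the common model of the tangent spaces of `T³`. -/
abbrev V3 : Type := ℝ × ℝ × ℝ

/-!
In the `g`-direction `DFⁿ` is multiplication by the product of the values of `g'` along the
`g`-orbit, while `h` expands `E₃` by `φ² = φ + 1 = (3 + √5) / 2`, where `φ` is the golden ratio.
Off `1/2` the forward `g`-orbits tend to the attracting fixed point `0 = 1` of the circle, where
`g'` is `1/2`; at `1/2` itself `g'` equals `φ²`. Off `0` the backward `g`-orbits tend to `1/2`, so
an invariant set that leaves `{0} × T²` comes arbitrarily close to `{1/2} × T²`, where domination
fails.

For the ergodicity of `h`: the measure of the symmetric difference of an `h`-invariant set and its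
translate by `x` equals that for the translate by `hⁿ x`. It vanishes when `hⁿ x → 0`, which happens
for all `x` on the stable line of `h`, and that line is dense.
-/

open scoped Topology

section Ergodicity

variable {G : Type*} [AddGroup G] [MeasurableSpace G] {μ : Measure G} {f : G →+ G}

open scoped symmDiff

theorem measure_symmDiff_add_left_map [MeasurableAdd G]
    (hf : MeasurePreserving f μ μ) {s : Set G} (hsm : MeasurableSet s) (hs : f ⁻¹' s = s) (x : G) :
    μ (((f x + ·) ⁻¹' s) ∆ s) = μ (((x + ·) ⁻¹' s) ∆ s) := by
  have hpre : f ⁻¹' (((f x + ·) ⁻¹' s) ∆ s) = ((x + ·) ⁻¹' s) ∆ s := by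
    rw [Set.preimage_symmDiff, hs]
    congr 1
    nth_rewrite 2 [← hs]
    simp only [Set.preimage_preimage, map_add]
  have hmeas : MeasurableSet (((f x + ·) ⁻¹' s) ∆ s) :=
    ((measurable_const_add (f x)) hsm).symmDiff hsm
  rw [← hf.measure_preimage hmeas.nullMeasurableSet, hpre]

theorem ergodic_of_dense_tendsto_zero [TopologicalSpace G] [IsTopologicalAddGroup G]
    [SecondCountableTopology G] [CompactSpace G] [BorelSpace G] [μ.IsAddHaarMeasure]
    (hf : MeasurePreserving f μ μ)
    (hdense : Dense {x : G | Tendsto (fun n : ℕ => f^[n] x) atTop (𝓝 0)}) : Ergodic f μ := by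
  refine ⟨hf, ⟨fun s hsm hs => ?_⟩⟩
  refine aeconst_of_dense_setOfPred_preimage_vadd_ae (M := G) hsm.nullMeasurableSet (hdense.mono ?_)
  intro x hx
  let translate : C(G, C(G, G)) := ContinuousMap.curry ⟨fun p : G × G => p.1 + p.2, continuous_add⟩
  have htranslate (z : G) : MeasurePreserving (translate z) μ μ := measurePreserving_add_left μ z
  have hlim := tendsto_measure_symmDiff_preimage_nhds_zero
    ((translate.continuous.tendsto 0).comp hx) (Eventually.of_forall fun _ => htranslate _)
    (htranslate 0) hsm.nullMeasurableSet (measure_ne_top μ s)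
  have hconst (n : ℕ) : μ (((f^[n] x + ·) ⁻¹' s) ∆ s) = μ (((x + ·) ⁻¹' s) ∆ s) := by
    induction n with
    | zero => rfl
    | succ n ih =>
      rw [Function.iterate_succ_apply', measure_symmDiff_add_left_map hf hsm hs, ih]
  have hzero : translate 0 ⁻¹' s = s := by
    ext y
    simp only [translate, Set.mem_preimage, ContinuousMap.curry_apply, ContinuousMap.coe_mk,
      zero_add]
  rw [hzero] at hlim
  exact measure_symmDiff_eq_zero_iff.1
    (tendsto_nhds_unique tendsto_const_nhds (hlim.congr hconst))

end Ergodicity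

section CatMap

/-- The hyperbolic automorphism `h : (y, z) ↦ (2y + z, y + z)`, over any abelian group so that the
same formula is the torus map and its lift to `ℝ²`. -/
def catMap (G : Type*) [AddCommGroup G] : G × G →+ G × G where
  toFun q := (2 • q.1 + q.2, q.1 + q.2)
  map_zero' := by simp
  map_add' p q := by ext <;> simp only [Prod.fst_add, Prod.snd_add, smul_add] <;> abel

theorem catMap_apply {G : Type*} [AddCommGroup G] (q : G × G) :
    catMap G q = (2 • q.1 + q.2, q.1 + q.2) := rfl

theorem catMap_surjective (G : Type*) [AddCommGroup G] : Function.Surjective (catMap G) := by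
  refine fun q => ⟨(q.1 - q.2, 2 • q.2 - q.1), ?_⟩
  rw [catMap_apply]
  ext <;> simp only <;> abel

theorem semiconj_prodMap_catMap {G H : Type*} [AddCommGroup G] [AddCommGroup H] (f : G →+ H) :
    Function.Semiconj (Prod.map f f) (catMap G) (catMap H) := fun q => by
  simp only [catMap_apply, Prod.map_apply, Prod.map_fst, Prod.map_snd, map_add, map_nsmul]

theorem catMap_iterate_eigenvector {R : Type*} [CommRing R] {c : R} (hc : c ^ 2 = c + 1) (t : R)
    (n : ℕ) : (catMap R)^[n] (c * t, t) = ((c + 1) ^ n * (c * t), (c + 1) ^ n * t) := by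
  induction n with
  | zero => simp
  | succ n ih =>
    rw [Function.iterate_succ_apply', ih, catMap_apply]
    ext
    · simp only [nsmul_eq_mul, Nat.cast_ofNat]
      linear_combination (-(c + 1) ^ n * t) * hc
    · ring

theorem denseRange_coe_irrational_line {a : ℝ} (ha : Irrational a) :
    DenseRange fun t : ℝ => (((a * t : ℝ) : UnitAddCircle), (t : UnitAddCircle)) := by
  let L : ℝ →+ UnitAddCircle × UnitAddCircle :=
    { toFun := fun t => (((a * t : ℝ) : UnitAddCircle), (t : UnitAddCircle))
      map_zero' := by simp
      map_add' := fun s t => by simp [mul_add] }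
  -- The integer times on the line are the orbit of an irrational rotation of the first circle.
  have hcircle (y : UnitAddCircle) : (y, (0 : UnitAddCircle)) ∈ L.range.topologicalClosure := by
    have hd : DenseRange fun k : ℤ => k • (a : UnitAddCircle) :=
      AddCircle.denseRange_zsmul_coe_iff.2 (by rwa [div_one])
    refine hd.induction_on (p := fun y => (y, (0 : UnitAddCircle)) ∈ L.range.topologicalClosure) y
      (L.range.isClosed_topologicalClosure.preimage (by fun_prop))
      fun k => L.range.le_topologicalClosure ⟨k, ?_⟩
    have hk : ((k : ℝ) : UnitAddCircle) = 0 := (AddCircle.coe_eq_zero_iff 1).2 ⟨k, by simp⟩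
    simp only [L, AddMonoidHom.coe_mk, ZeroHom.coe_mk, hk, ← AddCircle.coe_zsmul, zsmul_eq_mul,
      mul_comm]
  rintro ⟨y, z⟩
  obtain ⟨t, rfl⟩ := QuotientAddGroup.mk_surjective z
  have hsum := add_mem (L.range.le_topologicalClosure ⟨t, rfl⟩)
    (hcircle (y - ((a * t : ℝ) : UnitAddCircle)))
  simpa [L] using! hsum

theorem tendsto_iterate_catMap_stable_line (t : ℝ) :
    Tendsto (fun n : ℕ => (catMap UnitAddCircle)^[n]
      (((Real.goldenConj * t : ℝ) : UnitAddCircle), (t : UnitAddCircle))) atTop (𝓝 0) := by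
  let π : ℝ × ℝ → UnitAddCircle × UnitAddCircle :=
    Prod.map (QuotientAddGroup.mk' _) (QuotientAddGroup.mk' _)
  have hπ : Continuous π := (AddCircle.continuous_mk' 1).prodMap (AddCircle.continuous_mk' 1)
  have hpow : Tendsto (fun n : ℕ => (Real.goldenConj + 1) ^ n) atTop (𝓝 0) :=
    tendsto_pow_atTop_nhds_zero_of_lt_one (by linarith [Real.neg_one_lt_goldenConj])
      (by linarith [Real.goldenConj_neg])
  have hlift : Tendsto (fun n : ℕ => (catMap ℝ)^[n] (Real.goldenConj * t, t)) atTop (𝓝 0) := by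
    simp only [catMap_iterate_eigenvector Real.goldenConj_sq]
    simpa only [zero_mul, Prod.mk_zero_zero] using
      (hpow.mul_const (Real.goldenConj * t)).prodMk_nhds (hpow.mul_const t)
  have hzero : π 0 = 0 := by
    simp only [π, Prod.map_apply', Prod.fst_zero, Prod.snd_zero, map_zero, Prod.mk_zero_zero]
  rw [← hzero]
  exact ((hπ.tendsto 0).comp hlift).congr fun n =>
    (semiconj_prodMap_catMap (QuotientAddGroup.mk' _)).iterate_right n (Real.goldenConj * t, t)

theorem ergodic_catMap :
    Ergodic (catMap UnitAddCircle) (volume : Measure (UnitAddCircle × UnitAddCircle)) := by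
  have : (volume : Measure (UnitAddCircle × UnitAddCircle)).IsAddHaarMeasure :=
    Measure.prod.instIsAddHaarMeasure _ _
  have hcont : Continuous (catMap UnitAddCircle) := by
    rw [funext catMap_apply]
    fun_prop
  refine ergodic_of_dense_tendsto_zero
    ((catMap UnitAddCircle).measurePreserving hcont (catMap_surjective _) rfl) ?_
  refine (denseRange_coe_irrational_line Real.goldenConj_irrational).mono ?_
  rintro _ ⟨t, rfl⟩
  exact tendsto_iterate_catMap_stable_line t

end CatMap

section Cocycle

variable {M V : Type*} [NormedAddCommGroup V] [NormedSpace ℝ V]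

/-- The product `χ(x) χ(f x) ⋯ χ(fⁿ⁻¹ x)` of an observable along an orbit, the multiplicative
counterpart of a Birkhoff sum. -/
def birkhoffProduct {R : Type*} [CommMonoid R] (f : M → M) (χ : M → R) (n : ℕ) (x : M) : R :=
  ∏ i ∈ range n, χ (f^[i] x)

theorem birkhoffProduct_one {R : Type*} [CommMonoid R] (f : M → M) (χ : M → R) (x : M) :
    birkhoffProduct f χ 1 x = χ x :=
  prod_range_one _

theorem birkhoffProduct_const {R : Type*} [CommMonoid R] (f : M → M) (r : R) (n : ℕ) (x : M) :
    birkhoffProduct f (fun _ => r) n x = r ^ n := by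
  rw [birkhoffProduct, prod_const, card_range]

theorem tendsto_birkhoffProduct {ι R : Type*} [CommMonoid R] [TopologicalSpace R]
    [ContinuousMul R] {f : M → M} {χ : M → R} {y : ι → M} {l : Filter ι} {c : R}
    (h : ∀ i, Tendsto (fun k => χ (f^[i] (y k))) l (𝓝 c)) (n : ℕ) :
    Tendsto (fun k => birkhoffProduct f χ n (y k)) l (𝓝 (c ^ n)) := by
  simpa only [birkhoffProduct, prod_const, card_range] using
    tendsto_finsetProd (range n) fun i _ => h i

theorem tendsto_birkhoffProduct_iterate {R : Type*} [CommMonoid R] [TopologicalSpace R]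
    [ContinuousMul R] {f : M → M} {χ : M → R} {x : M} {c : R}
    (h : Tendsto (fun n => χ (f^[n] x)) atTop (𝓝 c)) (n : ℕ) {k : ℕ → ℕ}
    (hk : Tendsto k atTop atTop) :
    Tendsto (fun l => birkhoffProduct f χ n (f^[k l] x)) atTop (𝓝 (c ^ n)) := by
  refine tendsto_birkhoffProduct (fun i => ?_) n
  simp only [← Function.iterate_add_apply]
  exact h.comp (tendsto_atTop_mono (fun _ => Nat.le_add_left _ i) hk)

theorem tendsto_birkhoffProduct_symm_iterate {R : Type*} [CommMonoid R] [TopologicalSpace R]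
    [ContinuousMul R] {f : M ≃ M} {χ : M → R} {x : M} {c : R}
    (h : Tendsto (fun n => χ (f.symm^[n] x)) atTop (𝓝 c)) (n : ℕ) :
    Tendsto (fun k => birkhoffProduct f χ n (f.symm^[k] x)) atTop (𝓝 (c ^ n)) := by
  refine tendsto_birkhoffProduct (fun i => ?_) n
  refine (h.comp (tendsto_sub_atTop_nat i)).congr' ?_
  filter_upwards [eventually_ge_atTop i] with k hk
  obtain ⟨m, rfl⟩ := Nat.exists_eq_add_of_le hk
  rw [Function.comp_apply, Nat.add_sub_cancel_left, Function.iterate_add_apply,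
    Function.LeftInverse.iterate f.apply_symm_apply i]

theorem cocN_apply_eigenvector {f : M ≃ M} {A : M → V ≃L[ℝ] V} {χ : M → ℝ} {v : V}
    (hv : ∀ x, A x v = χ x • v) (n : ℕ) (x : M) :
    cocN f A n x v = birkhoffProduct f χ n x • v := by
  induction n with
  | zero => simp [cocN, birkhoffProduct]
  | succ n ih =>
    rw [cocN, ContinuousLinearEquiv.trans_apply, ih, map_smul, hv, smul_smul, birkhoffProduct,
      birkhoffProduct, prod_range_succ]

theorem eigenvalue_ne_zero {T : V ≃L[ℝ] V} {v : V} {c : ℝ} (hv : v ≠ 0) (hT : T v = c • v) :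
    c ≠ 0 := by
  rintro rfl
  rw [zero_smul, EmbeddingLike.map_eq_zero_iff] at hT
  exact hv hT

theorem map_span_eq_of_eigenvectors {T : V ≃L[ℝ] V} {s : Set V}
    (hT : ∀ v ∈ s, ∃ c : ℝ, T v = c • v) :
    Submodule.map ((T : V →L[ℝ] V) : V →ₗ[ℝ] V) (Submodule.span ℝ s) = Submodule.span ℝ s := by
  rw [Submodule.map_span]
  refine le_antisymm (Submodule.span_le.2 ?_) (Submodule.span_le.2 fun v hv => ?_)
  · rintro _ ⟨v, hv, rfl⟩
    obtain ⟨c, hc⟩ := hT v hv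
    exact hc.symm ▸ Submodule.smul_mem _ c (Submodule.subset_span hv)
  · obtain rfl | hv0 := eq_or_ne v 0
    · exact zero_mem _
    obtain ⟨c, hc⟩ := hT v hv
    rw [← inv_smul_smul₀ (eigenvalue_ne_zero hv0 hc) v, ← hc]
    exact Submodule.smul_mem _ _ (Submodule.subset_span ⟨v, hv, rfl⟩)

theorem opNormOn_span_pair {T : V →L[ℝ] V} {e e' : V} {c d : ℝ}
    (hnorm : ∀ s t : ℝ, ‖s • e + t • e'‖ = max |s| |t|) (he : T e = c • e) (he' : T e' = d • e') :
    opNormOn T (Submodule.span ℝ {e, e'}) = max |c| |d| := by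
  have hT (s t : ℝ) : ‖T (s • e + t • e')‖ = max (|c| * |s|) (|d| * |t|) := by
    rw [map_add, map_smul, map_smul, he, he', smul_smul, smul_smul, hnorm, abs_mul, abs_mul,
      mul_comm |s|, mul_comm |t|]
  refine IsGreatest.csSup_eq ⟨⟨(1 : ℝ) • e + (1 : ℝ) • e',
    ⟨Submodule.mem_span_pair.2 ⟨1, 1, rfl⟩, ?_⟩, ?_⟩, ?_⟩
  · rw [hnorm, abs_one, max_self]
  · simp only [hT, abs_one, mul_one]
  · rintro _ ⟨v, ⟨hv, hv1⟩, rfl⟩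
    obtain ⟨s, t, rfl⟩ := Submodule.mem_span_pair.1 hv
    rw [hnorm] at hv1
    simp only [hT]
    exact max_le_max
      (mul_le_of_le_one_right (abs_nonneg c) ((le_max_left _ _).trans hv1.le))
      (mul_le_of_le_one_right (abs_nonneg d) ((le_max_right _ _).trans hv1.le))

theorem minNormOn_span_singleton {T : V →L[ℝ] V} {v : V} {c : ℝ} (hv : v ≠ 0)
    (hT : T v = c • v) : minNormOn T (Submodule.span ℝ {v}) = |c| := by
  have hnorm {w : V} (hw : w ∈ Submodule.span ℝ {v}) (hw1 : ‖w‖ = 1) : ‖T w‖ = |c| := by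
    obtain ⟨t, rfl⟩ := Submodule.mem_span_singleton.1 hw
    rw [map_smul, hT, smul_comm, norm_smul, hw1, mul_one, Real.norm_eq_abs]
  have hunit : ‖‖v‖⁻¹ • v‖ = 1 := by
    rw [norm_smul, norm_inv, norm_norm, inv_mul_cancel₀ (norm_ne_zero_iff.2 hv)]
  have hmem : ‖v‖⁻¹ • v ∈ Submodule.span ℝ {v} := Submodule.mem_span_singleton.2 ⟨_, rfl⟩
  refine IsLeast.csInf_eq ⟨⟨_, ⟨hmem, hunit⟩, hnorm hmem hunit⟩, ?_⟩
  rintro _ ⟨w, ⟨hw, hw1⟩, rfl⟩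
  exact (hnorm hw hw1).ge

theorem tendsto_log_norm_cocN_eigenvector_div {f : M ≃ M} {A : M → V ≃L[ℝ] V} {χ : M → ℝ} {v : V}
    (hv : ∀ x, A x v = χ x • v) (hv0 : v ≠ 0) {x : M} {r : ℝ} (hr : r ≠ 0)
    (hχ : Tendsto (fun n => χ (f^[n] x)) atTop (𝓝 r)) :
    Tendsto (fun n : ℕ => Real.log ‖cocN f A n x v‖ / n) atTop (𝓝 (Real.log r)) := by
  have hlog (n : ℕ) : Real.log ‖cocN f A n x v‖ / n =
      (n : ℝ)⁻¹ * ∑ i ∈ range n, Real.log (χ (f^[i] x)) + Real.log ‖v‖ / n := by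
    have hχ0 (i : ℕ) : χ (f^[i] x) ≠ 0 := eigenvalue_ne_zero hv0 (hv _)
    have hprod : birkhoffProduct f χ n x ≠ 0 := prod_ne_zero_iff.2 fun i _ => hχ0 i
    rw [cocN_apply_eigenvector hv, norm_smul, Real.norm_eq_abs,
      Real.log_mul (abs_ne_zero.2 hprod) (norm_ne_zero_iff.2 hv0), Real.log_abs, birkhoffProduct,
      Real.log_prod fun i _ => hχ0 i, add_div, div_eq_inv_mul]
  simp only [hlog]
  simpa only [add_zero] using
    (hχ.log hr).cesaro.add (tendsto_const_div_atTop_nhds_zero_nat (Real.log ‖v‖))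

/-- The splitting `E ⊕ F` is `(S, lam)`-dominated on `Δ`: the pointwise counterpart of
`LimitDominated`. -/
def Dominated (f : M ≃ M) (A : M → V ≃L[ℝ] V) (E F : M → Submodule ℝ V) (Δ : Set M) (S : ℕ)
    (lam : ℝ) : Prop :=
  ∀ x ∈ Δ, Real.log (opNormOn (cocN f A S x : V →L[ℝ] V) (E x)
    / minNormOn (cocN f A S x : V →L[ℝ] V) (F x)) ≤ -(2 * lam)

/-- The generator `A` is diagonal in the directions `e₁`, `e₂`, `e₃`, with a variable eigenvalue
`χ` on `e₁` and constant eigenvalues `a`, `b` on `e₂`, `e₃`. The norm is required to be the sup norm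
of the coordinates along `e₁`, `e₂`, so that norms on their span are read off the eigenvalues. -/
structure IsDiagonalCocycle (A : M → V ≃L[ℝ] V) (χ : M → ℝ) (a b : ℝ) (e₁ e₂ e₃ : V) : Prop where
  apply₁ : ∀ x, A x e₁ = χ x • e₁
  apply₂ : ∀ x, A x e₂ = a • e₂
  apply₃ : ∀ x, A x e₃ = b • e₃
  norm_smul_add_smul : ∀ s t : ℝ, ‖s • e₁ + t • e₂‖ = max |s| |t|
  ne_zero₃ : e₃ ≠ 0

namespace IsDiagonalCocycle

variable {f : M ≃ M} {A : M → V ≃L[ℝ] V} {χ : M → ℝ} {a b c lam : ℝ} {e₁ e₂ e₃ : V} {S : ℕ}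
  {Δ : Set M} {x : M}

theorem ne_zero₁ (hA : IsDiagonalCocycle A χ a b e₁ e₂ e₃) : e₁ ≠ 0 := by
  rintro rfl
  simpa using hA.norm_smul_add_smul 1 0

theorem ne_zero₂ (hA : IsDiagonalCocycle A χ a b e₁ e₂ e₃) : e₂ ≠ 0 := by
  rintro rfl
  simpa using hA.norm_smul_add_smul 0 1

theorem map_span_pair (hA : IsDiagonalCocycle A χ a b e₁ e₂ e₃) (x : M) :
    Submodule.map ((A x : V →L[ℝ] V) : V →ₗ[ℝ] V) (Submodule.span ℝ {e₁, e₂}) =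
      Submodule.span ℝ {e₁, e₂} := by
  refine map_span_eq_of_eigenvectors ?_
  rintro v (rfl | rfl)
  exacts [⟨_, hA.apply₁ x⟩, ⟨_, hA.apply₂ x⟩]

theorem map_span_singleton (hA : IsDiagonalCocycle A χ a b e₁ e₂ e₃) (x : M) :
    Submodule.map ((A x : V →L[ℝ] V) : V →ₗ[ℝ] V) (Submodule.span ℝ {e₃}) =
      Submodule.span ℝ {e₃} := by
  refine map_span_eq_of_eigenvectors ?_
  rintro v rfl
  exact ⟨_, hA.apply₃ x⟩

theorem opNormOn_div_minNormOn (hA : IsDiagonalCocycle A χ a b e₁ e₂ e₃) (n : ℕ) (x : M) :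
    opNormOn (cocN f A n x : V →L[ℝ] V) (Submodule.span ℝ {e₁, e₂})
        / minNormOn (cocN f A n x : V →L[ℝ] V) (Submodule.span ℝ {e₃}) =
      max |birkhoffProduct f χ n x| |a ^ n| / |b ^ n| := by
  have h₁ := cocN_apply_eigenvector (f := f) hA.apply₁ n x
  have h₂ := cocN_apply_eigenvector (f := f) hA.apply₂ n x
  have h₃ := cocN_apply_eigenvector (f := f) hA.apply₃ n x
  rw [birkhoffProduct_const] at h₂ h₃
  rw [opNormOn_span_pair hA.norm_smul_add_smul h₁ h₂, minNormOn_span_singleton hA.ne_zero₃ h₃]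

theorem tendsto_log_opNormOn_div_minNormOn (hA : IsDiagonalCocycle A χ a b e₁ e₂ e₃)
    {y : ℕ → M} {n : ℕ}
    (hy : Tendsto (fun l => birkhoffProduct f χ n (y l)) atTop (𝓝 (c ^ n))) :
    Tendsto (fun l => Real.log
        (opNormOn (cocN f A n (y l) : V →L[ℝ] V) (Submodule.span ℝ {e₁, e₂})
          / minNormOn (cocN f A n (y l) : V →L[ℝ] V) (Submodule.span ℝ {e₃})))
      atTop (𝓝 (n * Real.log (max |c| |a| / |b|))) := by
  have ha : 0 < |a| := abs_pos.2 (eigenvalue_ne_zero hA.ne_zero₂ (hA.apply₂ (y 0)))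
  have hb : 0 < |b| := abs_pos.2 (eigenvalue_ne_zero hA.ne_zero₃ (hA.apply₃ (y 0)))
  have hratio : max |c ^ n| |a ^ n| / |b ^ n| = (max |c| |a| / |b|) ^ n := by
    rw [abs_pow, abs_pow, abs_pow, div_pow,
      (pow_left_monotoneOn (n := n)).map_max (abs_nonneg c) (abs_nonneg a)]
  simp only [hA.opNormOn_div_minNormOn]
  rw [← Real.log_pow, ← hratio]
  refine ((hy.abs.max tendsto_const_nhds).div_const _).log ?_
  rw [hratio]
  positivity

theorem limitDominated_singleton_iff (hA : IsDiagonalCocycle A χ a b e₁ e₂ e₃) (hS : 0 < S)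
    (hχ : Tendsto (fun n => χ (f^[n] x)) atTop (𝓝 c)) :
    LimitDominated f A (fun _ => Submodule.span ℝ {e₁, e₂}) (fun _ => Submodule.span ℝ {e₃})
      {x} S lam ↔ S * Real.log (max |c| |a| / |b|) ≤ -(2 * lam) := by
  have hlim := (hA.tendsto_log_opNormOn_div_minNormOn (tendsto_birkhoffProduct_iterate hχ S
    (tendsto_id.atTop_mul_const' hS))).limsup_eq
  simp only [id_eq] at hlim
  simp only [LimitDominated, Set.mem_singleton_iff, forall_eq, hlim]

theorem mul_log_nonneg (hA : IsDiagonalCocycle A χ a b e₁ e₂ e₃) (x : M) (hbc : |b| ≤ |c|)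
    (n : ℕ) : 0 ≤ n * Real.log (max |c| |a| / |b|) :=
  mul_nonneg n.cast_nonneg (Real.log_nonneg ((one_le_div
    (abs_pos.2 (eigenvalue_ne_zero hA.ne_zero₃ (hA.apply₃ x)))).2 (le_max_of_le_left hbc)))

theorem not_limitDominated_singleton (hA : IsDiagonalCocycle A χ a b e₁ e₂ e₃) (hS : 0 < S)
    (hχ : Tendsto (fun n => χ (f^[n] x)) atTop (𝓝 c)) (hbc : |b| ≤ |c|) (hlam : 0 < lam) :
    ¬ LimitDominated f A (fun _ => Submodule.span ℝ {e₁, e₂}) (fun _ => Submodule.span ℝ {e₃})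
      {x} S lam := by
  rw [hA.limitDominated_singleton_iff hS hχ]
  linarith [hA.mul_log_nonneg x hbc S]

theorem tendsto_log_norm_cocN_div (hA : IsDiagonalCocycle A χ a b e₁ e₂ e₃) (hc : c ≠ 0)
    (hχ : Tendsto (fun n => χ (f^[n] x)) atTop (𝓝 c)) :
    Tendsto (fun n : ℕ => Real.log ‖cocN f A n x e₁‖ / n) atTop (𝓝 (Real.log c)) ∧
    Tendsto (fun n : ℕ => Real.log ‖cocN f A n x e₂‖ / n) atTop (𝓝 (Real.log a)) ∧
    Tendsto (fun n : ℕ => Real.log ‖cocN f A n x e₃‖ / n) atTop (𝓝 (Real.log b)) :=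
  ⟨tendsto_log_norm_cocN_eigenvector_div hA.apply₁ hA.ne_zero₁ hc hχ,
    tendsto_log_norm_cocN_eigenvector_div hA.apply₂ hA.ne_zero₂
      (eigenvalue_ne_zero hA.ne_zero₂ (hA.apply₂ x)) tendsto_const_nhds,
    tendsto_log_norm_cocN_eigenvector_div hA.apply₃ hA.ne_zero₃
      (eigenvalue_ne_zero hA.ne_zero₃ (hA.apply₃ x)) tendsto_const_nhds⟩

theorem dominated_one (hA : IsDiagonalCocycle A χ a b e₁ e₂ e₃)
    (h : ∀ x ∈ Δ, Real.log (max |χ x| |a| / |b|) ≤ -(2 * lam)) :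
    Dominated f A (fun _ => Submodule.span ℝ {e₁, e₂}) (fun _ => Submodule.span ℝ {e₃})
      Δ 1 lam := fun x hx => by
  rw [hA.opNormOn_div_minNormOn, birkhoffProduct_one, pow_one, pow_one]
  exact h x hx

theorem not_dominated (hA : IsDiagonalCocycle A χ a b e₁ e₂ e₃) (hΔ : f '' Δ = Δ) (hx : x ∈ Δ)
    (hχ : Tendsto (fun n => χ (f.symm^[n] x)) atTop (𝓝 c)) (hbc : |b| ≤ |c|) (hlam : 0 < lam) :
    ¬ Dominated f A (fun _ => Submodule.span ℝ {e₁, e₂}) (fun _ => Submodule.span ℝ {e₃})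
      Δ S lam := fun h => by
  have hback : Set.MapsTo f.symm Δ Δ := fun y hy => by
    rw [← hΔ] at hy
    obtain ⟨z, hz, rfl⟩ := hy
    rwa [f.symm_apply_apply]
  have hle := le_of_tendsto'
    (hA.tendsto_log_opNormOn_div_minNormOn (tendsto_birkhoffProduct_symm_iterate hχ S))
    fun n => h _ (hback.iterate n hx)
  linarith [hA.mul_log_nonneg x hbc S]

end IsDiagonalCocycle

end Cocycle

section IntervalDynamics

variable {α : Type*}

theorem mem_Ico_iff_of_strictMonoOn [LinearOrder α] {g : α → α} {s : Set α} {a b x : α}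
    (hg : StrictMonoOn g s) (ha : a ∈ s) (hga : g a = a) (hb : b ∈ s) (hgb : g b = b)
    (hx : x ∈ s) : g x ∈ Set.Ico a b ↔ x ∈ Set.Ico a b := by
  rw [Set.mem_Ico, Set.mem_Ico, ← hg.le_iff_le ha hx, ← hg.lt_iff_lt hx hb, hga, hgb]

theorem mem_Ioc_iff_of_strictMonoOn [LinearOrder α] {g : α → α} {s : Set α} {a b x : α}
    (hg : StrictMonoOn g s) (ha : a ∈ s) (hga : g a = a) (hb : b ∈ s) (hgb : g b = b)
    (hx : x ∈ s) : g x ∈ Set.Ioc a b ↔ x ∈ Set.Ioc a b := by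
  rw [Set.mem_Ioc, Set.mem_Ioc, ← hg.lt_iff_lt ha hx, ← hg.le_iff_le hx hb, hga, hgb]

theorem isFixedPt_of_tendsto_of_continuousWithinAt [TopologicalSpace α] [T2Space α] {g : α → α}
    {s : Set α} {u : ℕ → α} {L : α} (hg : ContinuousWithinAt g s L) (hus : ∀ n, u n ∈ s)
    (hu : Tendsto u atTop (𝓝 L)) (hgu : Tendsto (fun n => g (u n)) atTop (𝓝 L)) :
    Function.IsFixedPt g L :=
  tendsto_nhds_unique
    (hg.tendsto.comp (tendsto_nhdsWithin_iff.2 ⟨hu, Eventually.of_forall hus⟩)) hgu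

variable [ConditionallyCompleteLinearOrder α] [TopologicalSpace α] [OrderTopology α]
  {g : α → α} {a b : α}

theorem tendsto_iterate_left_endpoint (hcont : ContinuousOn g (Set.Ico a b))
    (hmaps : Set.MapsTo g (Set.Ico a b) (Set.Ico a b)) (ha : g a = a)
    (hlt : ∀ x ∈ Set.Ioo a b, g x < x) {x : α} (hx : x ∈ Set.Ico a b) :
    Tendsto (fun n => g^[n] x) atTop (𝓝 a) := by
  have hmem (n : ℕ) : g^[n] x ∈ Set.Ico a b := hmaps.iterate n hx
  have hanti : Antitone fun n => g^[n] x := antitone_nat_of_succ_le fun n => by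
    rw [Function.iterate_succ_apply']
    obtain h | h := (hmem n).1.eq_or_lt
    · rw [← h, ha]
    · exact (hlt _ ⟨h, (hmem n).2⟩).le
  have hbdd : BddBelow (Set.range fun n => g^[n] x) :=
    ⟨a, Set.forall_mem_range.2 fun n => (hmem n).1⟩
  have hlim := tendsto_atTop_ciInf hanti hbdd
  have hL : ⨅ n, g^[n] x ∈ Set.Ico a b :=
    ⟨le_ciInf fun n => (hmem n).1, (ciInf_le hbdd 0).trans_lt hx.2⟩
  have hfix := isFixedPt_of_tendsto_of_continuousWithinAt (hcont _ hL) hmem hlim <| by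
    simpa only [Function.iterate_succ_apply'] using (tendsto_add_atTop_iff_nat 1).2 hlim
  have hLa : a = ⨅ n, g^[n] x :=
    hL.1.eq_of_not_lt fun h => (hlt _ ⟨h, hL.2⟩).ne hfix
  rwa [← hLa] at hlim

theorem tendsto_iterate_right_endpoint (hcont : ContinuousOn g (Set.Ioc a b))
    (hmaps : Set.MapsTo g (Set.Ioc a b) (Set.Ioc a b)) (hb : g b = b)
    (hlt : ∀ x ∈ Set.Ioo a b, x < g x) {x : α} (hx : x ∈ Set.Ioc a b) :
    Tendsto (fun n => g^[n] x) atTop (𝓝 b) := by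
  have hdual : Set.Ioc a b = Set.Ico (OrderDual.toDual b) (OrderDual.toDual a) :=
    Set.Ico_toDual.symm
  rw [hdual] at hcont hmaps hx
  exact tendsto_iterate_left_endpoint (α := αᵒᵈ) hcont hmaps hb (fun x hx => hlt x hx.symm) hx

theorem tendsto_backward_orbit_right_endpoint (hcont : ContinuousOn g (Set.Ioc a b))
    (hlt : ∀ x ∈ Set.Ioo a b, g x < x) {u : ℕ → α} (hmem : ∀ n, u n ∈ Set.Ioc a b)
    (hback : ∀ n, g (u (n + 1)) = u n) : Tendsto u atTop (𝓝 b) := by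
  have hmono : Monotone u := monotone_nat_of_le_succ fun n => by
    obtain h | h := (hmem (n + 1)).2.eq_or_lt
    · exact (hmem n).2.trans h.ge
    · exact (hback n).ge.trans (hlt _ ⟨(hmem (n + 1)).1, h⟩).le
  have hbdd : BddAbove (Set.range u) := ⟨b, Set.forall_mem_range.2 fun n => (hmem n).2⟩
  have hlim := tendsto_atTop_ciSup hmono hbdd
  have hL : ⨆ n, u n ∈ Set.Ioc a b :=
    ⟨(hmem 0).1.trans_le (le_ciSup hbdd 0), ciSup_le fun n => (hmem n).2⟩
  have hfix := isFixedPt_of_tendsto_of_continuousWithinAt (hcont _ hL) (fun n => hmem (n + 1))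
    ((tendsto_add_atTop_iff_nat 1).2 hlim) (by simpa only [hback] using hlim)
  have hLb : ⨆ n, u n = b :=
    hL.2.eq_of_not_lt fun h => (hlt _ ⟨hL.1, h⟩).ne hfix
  rwa [hLb] at hlim

theorem tendsto_backward_orbit_left_endpoint (hcont : ContinuousOn g (Set.Ico a b))
    (hlt : ∀ x ∈ Set.Ioo a b, x < g x) {u : ℕ → α} (hmem : ∀ n, u n ∈ Set.Ico a b)
    (hback : ∀ n, g (u (n + 1)) = u n) : Tendsto u atTop (𝓝 a) := by
  have hdual : Set.Ico a b = Set.Ioc (OrderDual.toDual b) (OrderDual.toDual a) :=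
    Set.Ioc_toDual.symm
  rw [hdual] at hcont hmem
  exact tendsto_backward_orbit_right_endpoint (α := αᵒᵈ) hcont (fun x hx => hlt x hx.symm) hmem
    hback

end IntervalDynamics

section Circle

theorem liftc_mem (x : UnitAddCircle) : liftc x ∈ Set.Ico (0 : ℝ) 1 := by
  have : Fact ((0 : ℝ) < 1) := ⟨zero_lt_one⟩
  simpa only [liftc, zero_add] using (AddCircle.equivIco (1 : ℝ) 0 x).2

theorem coe_liftc (x : UnitAddCircle) : ((liftc x : ℝ) : UnitAddCircle) = x := by
  have : Fact ((0 : ℝ) < 1) := ⟨zero_lt_one⟩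
  exact AddCircle.coe_equivIco

theorem liftc_coe {t : ℝ} (ht : t ∈ Set.Ico (0 : ℝ) 1) : liftc (t : UnitAddCircle) = t := by
  have : Fact ((0 : ℝ) < 1) := ⟨zero_lt_one⟩
  exact AddCircle.equivIco_coe_of_mem (a := (0 : ℝ)) (by rwa [zero_add])

theorem liftc_eq_iff {x : UnitAddCircle} {t : ℝ} (ht : t ∈ Set.Ico (0 : ℝ) 1) :
    liftc x = t ↔ x = t :=
  ⟨fun h => by rw [← h, coe_liftc], fun h => by rw [h, liftc_coe ht]⟩

theorem liftc_eq_zero_iff {x : UnitAddCircle} : liftc x = 0 ↔ x = 0 := by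
  simpa only [AddCircle.coe_zero] using liftc_eq_iff (x := x) (Set.left_mem_Ico.2 zero_lt_one)

theorem liftc_zero : liftc 0 = 0 := liftc_eq_zero_iff.2 rfl

theorem zero_ne_coe_half : (0 : UnitAddCircle) ≠ ((1 / 2 : ℝ) : UnitAddCircle) := by
  rw [Ne, ← liftc_eq_iff (by norm_num), liftc_zero]
  norm_num

theorem measurable_liftc : Measurable liftc := by
  have : Fact ((0 : ℝ) < 1) := ⟨zero_lt_one⟩
  exact measurable_subtype_coe.comp (AddCircle.measurableEquivIco 1 0).measurable

variable {g : ℝ → ℝ}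

theorem measurable_gbar (hg : ContinuousOn g (Set.Icc 0 1)) : Measurable (gbar g) := by
  have heq : gbar g = fun x =>
      ((Set.IccExtend zero_le_one ((Set.Icc 0 1).domRestrict g) (liftc x) : ℝ) :
        UnitAddCircle) := by
    funext x
    rw [Set.IccExtend_of_mem _ _ (Set.Ico_subset_Icc_self (liftc_mem x)), Set.domRestrict_apply,
      gbar]
  rw [heq]
  exact ((AddCircle.continuous_mk' 1).comp hg.domRestrict.Icc_extend').measurable.comp
    measurable_liftc

theorem gbar_coe_of_fixed {t : ℝ} (ht : t ∈ Set.Ico (0 : ℝ) 1) (hgt : g t = t) :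
    gbar g t = t := by
  rw [gbar, liftc_coe ht, hgt]

theorem semiconj_liftc_gbar (hg : Set.MapsTo g (Set.Ico 0 1) (Set.Ico 0 1)) :
    Function.Semiconj liftc (gbar g) g := fun x =>
  liftc_coe (hg (liftc_mem x))

/-- A continuous, strictly increasing self-map of `[0, 1]` fixing `0`, `1/2` and `1`, attracting at
the end points and repelling in the middle: the dynamics of `g` in the `S¹`-direction. -/
structure IsRepellingAtHalf (g : ℝ → ℝ) : Prop where
  strictMonoOn : StrictMonoOn g (Set.Icc 0 1)
  continuousOn : ContinuousOn g (Set.Icc 0 1)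
  zero : g 0 = 0
  half : g (1 / 2) = 1 / 2
  one : g 1 = 1
  lt_self : ∀ x ∈ Set.Ioo (0 : ℝ) (1 / 2), g x < x
  self_lt : ∀ x ∈ Set.Ioo (1 / 2 : ℝ) 1, x < g x

namespace IsRepellingAtHalf

theorem half_mem_Icc : (1 / 2 : ℝ) ∈ Set.Icc (0 : ℝ) 1 := by norm_num

theorem mapsTo_Ico (hg : IsRepellingAtHalf g) : Set.MapsTo g (Set.Ico 0 1) (Set.Ico 0 1) :=
  fun _ hx => (mem_Ico_iff_of_strictMonoOn hg.strictMonoOn (Set.left_mem_Icc.2 zero_le_one) hg.zero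
    (Set.right_mem_Icc.2 zero_le_one) hg.one (Set.Ico_subset_Icc_self hx)).2 hx

theorem gbar_eq_zero_iff (hg : IsRepellingAtHalf g) {x : UnitAddCircle} :
    gbar g x = 0 ↔ x = 0 := by
  rw [← liftc_eq_zero_iff, semiconj_liftc_gbar hg.mapsTo_Ico, ← liftc_eq_zero_iff,
    ← hg.strictMonoOn.injOn.eq_iff (Set.Ico_subset_Icc_self (liftc_mem x))
      (Set.left_mem_Icc.2 zero_le_one), hg.zero]

theorem mem_Ioc_zero_half_iff (hg : IsRepellingAtHalf g) {x : ℝ} (hx : x ∈ Set.Icc (0 : ℝ) 1) :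
    g x ∈ Set.Ioc 0 (1 / 2) ↔ x ∈ Set.Ioc 0 (1 / 2) :=
  mem_Ioc_iff_of_strictMonoOn hg.strictMonoOn (Set.left_mem_Icc.2 zero_le_one) hg.zero
    half_mem_Icc hg.half hx

theorem mem_Ico_half_one_iff (hg : IsRepellingAtHalf g) {x : ℝ} (hx : x ∈ Set.Icc (0 : ℝ) 1) :
    g x ∈ Set.Ico (1 / 2) 1 ↔ x ∈ Set.Ico (1 / 2) 1 :=
  mem_Ico_iff_of_strictMonoOn hg.strictMonoOn half_mem_Icc hg.half
    (Set.right_mem_Icc.2 zero_le_one) hg.one hx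

theorem tendsto_iterate_zero (hg : IsRepellingAtHalf g) {x : ℝ}
    (hx : x ∈ Set.Ico (0 : ℝ) (1 / 2)) : Tendsto (fun n => g^[n] x) atTop (𝓝 0) := by
  have hsub : Set.Ico (0 : ℝ) (1 / 2) ⊆ Set.Icc 0 1 :=
    Set.Ico_subset_Icc_self.trans (Set.Icc_subset_Icc_right half_mem_Icc.2)
  exact tendsto_iterate_left_endpoint (hg.continuousOn.mono hsub)
    (fun _ hy => (mem_Ico_iff_of_strictMonoOn hg.strictMonoOn (Set.left_mem_Icc.2 zero_le_one)
      hg.zero half_mem_Icc hg.half (hsub hy)).2 hy) hg.zero hg.lt_self hx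

theorem tendsto_iterate_one (hg : IsRepellingAtHalf g) {x : ℝ}
    (hx : x ∈ Set.Ioc (1 / 2 : ℝ) 1) : Tendsto (fun n => g^[n] x) atTop (𝓝 1) := by
  have hsub : Set.Ioc (1 / 2 : ℝ) 1 ⊆ Set.Icc 0 1 :=
    Set.Ioc_subset_Icc_self.trans (Set.Icc_subset_Icc_left half_mem_Icc.1)
  exact tendsto_iterate_right_endpoint (hg.continuousOn.mono hsub)
    (fun _ hy => (mem_Ioc_iff_of_strictMonoOn hg.strictMonoOn half_mem_Icc hg.half
      (Set.right_mem_Icc.2 zero_le_one) hg.one (hsub hy)).2 hy) hg.one hg.self_lt hx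

theorem tendsto_backward_orbit_half (hg : IsRepellingAtHalf g) {u : ℕ → ℝ}
    (hu : ∀ n, u n ∈ Set.Icc (0 : ℝ) 1) (hu0 : u 0 ∈ Set.Ioo (0 : ℝ) 1)
    (hback : ∀ n, g (u (n + 1)) = u n) : Tendsto u atTop (𝓝 (1 / 2)) := by
  obtain h | h := le_total (u 0) (1 / 2)
  · have hmem (n : ℕ) : u n ∈ Set.Ioc 0 (1 / 2) := by
      induction n with
      | zero => exact ⟨hu0.1, h⟩
      | succ n ih => rwa [← hback n, hg.mem_Ioc_zero_half_iff (hu _)] at ih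
    exact tendsto_backward_orbit_right_endpoint (hg.continuousOn.mono
      (Set.Ioc_subset_Icc_self.trans (Set.Icc_subset_Icc_right half_mem_Icc.2))) hg.lt_self hmem
      hback
  · have hmem (n : ℕ) : u n ∈ Set.Ico (1 / 2) 1 := by
      induction n with
      | zero => exact ⟨h, hu0.2⟩
      | succ n ih => rwa [← hback n, hg.mem_Ico_half_one_iff (hu _)] at ih
    exact tendsto_backward_orbit_left_endpoint (hg.continuousOn.mono
      (Set.Ico_subset_Icc_self.trans (Set.Icc_subset_Icc_left half_mem_Icc.1))) hg.self_lt hmem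
      hback

variable {M : Type*} {π : M → UnitAddCircle} {χ : ℝ → ℝ} {c : ℝ} {x : M}

theorem tendsto_iterate_of_ne_half (hg : IsRepellingAtHalf g) {f : M → M}
    (hπ : Function.Semiconj π f (gbar g)) (hχ : ContinuousOn χ (Set.Icc 0 1)) (h0 : χ 0 = c)
    (h1 : χ 1 = c) (hx : π x ≠ ((1 / 2 : ℝ) : UnitAddCircle)) :
    Tendsto (fun n => χ (liftc (π (f^[n] x)))) atTop (𝓝 c) := by
  have hlift := (semiconj_liftc_gbar hg.mapsTo_Ico).comp_left hπ
  have key {L : ℝ} (hL : L ∈ Set.Icc (0 : ℝ) 1) (hχL : χ L = c)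
      (hlim : Tendsto (fun n => g^[n] (liftc (π x))) atTop (𝓝 L)) :
      Tendsto (fun n => χ (liftc (π (f^[n] x)))) atTop (𝓝 c) :=
    hχL ▸ (hχ L hL).tendsto.comp (tendsto_nhdsWithin_iff.2
      ⟨hlim.congr fun n => ((hlift.iterate_right n).eq x).symm,
        Eventually.of_forall fun _ => Set.Ico_subset_Icc_self (liftc_mem _)⟩)
  have hne : liftc (π x) ≠ 1 / 2 := fun h => hx ((liftc_eq_iff (by norm_num)).1 h)
  obtain h | h := hne.lt_or_gt
  · exact key (Set.left_mem_Icc.2 zero_le_one) h0 (hg.tendsto_iterate_zero ⟨(liftc_mem _).1, h⟩)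
  · exact key (Set.right_mem_Icc.2 zero_le_one) h1
      (hg.tendsto_iterate_one ⟨h, (liftc_mem _).2.le⟩)

theorem tendsto_iterate_of_eq_half (hg : IsRepellingAtHalf g) {f : M → M}
    (hπ : Function.Semiconj π f (gbar g)) (hx : π x = ((1 / 2 : ℝ) : UnitAddCircle)) :
    Tendsto (fun n => χ (liftc (π (f^[n] x)))) atTop (𝓝 (χ (1 / 2))) := by
  have hmem : (1 / 2 : ℝ) ∈ Set.Ico (0 : ℝ) 1 := by norm_num
  simp only [(hπ.iterate_right _).eq, hx,
    Function.iterate_fixed (gbar_coe_of_fixed hmem hg.half), liftc_coe hmem, tendsto_const_nhds]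

theorem tendsto_symm_iterate_of_ne_zero (hg : IsRepellingAtHalf g) {f : M ≃ M}
    (hπ : Function.Semiconj π f (gbar g)) (hχ : ContinuousOn χ (Set.Icc 0 1)) (hx : π x ≠ 0) :
    Tendsto (fun n => χ (liftc (π (f.symm^[n] x)))) atTop (𝓝 (χ (1 / 2))) := by
  have hlift := (semiconj_liftc_gbar hg.mapsTo_Ico).comp_left hπ
  have hmem (y : M) : liftc (π y) ∈ Set.Icc (0 : ℝ) 1 := Set.Ico_subset_Icc_self (liftc_mem _)
  have hpos : 0 < liftc (π x) := (hmem x).1.lt_of_ne' (mt liftc_eq_zero_iff.1 hx)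
  have hback (n : ℕ) : g (liftc (π (f.symm^[n + 1] x))) = liftc (π (f.symm^[n] x)) := by
    rw [Function.iterate_succ_apply', ← Function.comp_apply (f := liftc), ← hlift.eq,
      f.apply_symm_apply, Function.comp_apply]
  have hlim := hg.tendsto_backward_orbit_half (u := fun n => liftc (π (f.symm^[n] x)))
    (fun n => hmem _) ⟨hpos, (liftc_mem _).2⟩ hback
  exact (hχ _ half_mem_Icc).tendsto.comp
    (tendsto_nhdsWithin_iff.2 ⟨hlim, Eventually.of_forall fun _ => hmem _⟩)

end IsRepellingAtHalf

end Circle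

section Golden

open Real

theorem goldenConj_add_one_pos : 0 < goldenConj + 1 := by
  linarith [neg_one_lt_goldenConj]

theorem goldenRatio_add_one : goldenRatio + 1 = (3 + √5) / 2 := by
  rw [goldenRatio]
  ring

theorem log_goldenConj_add_one : log (goldenConj + 1) = -log ((3 + √5) / 2) := by
  rw [← goldenRatio_add_one, ← log_inv]
  congr 1
  refine eq_inv_of_mul_eq_one_left ?_
  linear_combination goldenRatio_add_goldenConj + goldenRatio_mul_goldenConj

theorem goldenConj_add_one_le_half : goldenConj + 1 ≤ 1 / 2 := by
  have h : 2 ≤ √5 := (le_sqrt' two_pos).2 (by norm_num)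
  rw [goldenConj]
  linarith

theorem log_max_half_div_goldenRatio_add_one :
    log (max |1 / 2| |goldenConj + 1| / |goldenRatio + 1|) = -(2 * log √(3 + √5)) := by
  rw [abs_of_pos one_half_pos, abs_of_pos goldenConj_add_one_pos,
    max_eq_left goldenConj_add_one_le_half, goldenRatio_add_one, abs_of_pos (by positivity),
    log_sqrt (by positivity), mul_div_cancel₀ _ two_ne_zero, ← log_inv]
  congr 1
  field_simp

theorem log_sqrt_three_add_sqrt_five_pos : 0 < log √(3 + √5) :=
  log_pos ((lt_sqrt zero_le_one).2 (by linarith [sqrt_nonneg 5]))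

end Golden

section Torus

theorem isCompl_span_pair_span_singleton {K : Type*} [Field K] {c d : K} (hcd : c ≠ d) :
    IsCompl (Submodule.span K {((1, 0, 0) : K × K × K), (0, c, 1)})
      (Submodule.span K {(0, d, 1)}) := by
  have hne : d - c ≠ 0 := sub_ne_zero.2 hcd.symm
  constructor
  · rw [Submodule.disjoint_def]
    intro v hs hu
    obtain ⟨s, t, rfl⟩ := Submodule.mem_span_pair.1 hs
    obtain ⟨t', ht'⟩ := Submodule.mem_span_singleton.1 hu
    simp only [Prod.smul_mk, Prod.mk_add_mk, Prod.mk.injEq, smul_eq_mul, mul_one, mul_zero,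
      zero_add, add_zero] at ht'
    obtain ⟨rfl, h, rfl⟩ := ht'
    have ht : t' = 0 := (mul_eq_zero.1 (by linear_combination h)).resolve_right hne
    simp only [ht, zero_smul, add_zero]
  · rw [Submodule.codisjoint_iff_exists_add_eq]
    rintro ⟨x, y, z⟩
    refine ⟨_, _, Submodule.mem_span_pair.2 ⟨x, (d * z - y) / (d - c), rfl⟩,
      Submodule.mem_span_singleton.2 ⟨(y - c * z) / (d - c), rfl⟩, ?_⟩
    simp only [Prod.smul_mk, Prod.mk_add_mk, Prod.mk.injEq, smul_eq_mul, mul_one, mul_zero,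
      zero_add, add_zero]
    refine ⟨trivial, ?_, ?_⟩ <;> field_simp <;> ring

theorem norm_smul_add_smul_goldenConj (s t : ℝ) :
    ‖s • ((1, 0, 0) : V3) + t • (0, Real.goldenConj, 1)‖ = max |s| |t| := by
  have hψ : |Real.goldenConj| ≤ 1 :=
    abs_le.2 ⟨Real.neg_one_lt_goldenConj.le, by linarith [Real.goldenConj_neg]⟩
  have hle : |t| * |Real.goldenConj| ≤ |t| := mul_le_of_le_one_right (abs_nonneg t) hψ
  simp only [Prod.smul_mk, Prod.mk_add_mk, smul_eq_mul, mul_one, mul_zero, zero_add, add_zero,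
    Prod.norm_mk, Real.norm_eq_abs, abs_mul, max_eq_right hle]

theorem isDiagonalCocycle_prod_catMap {M : Type*} {A : M → (V3 ≃L[ℝ] V3)} {χ : M → ℝ}
    (hA : ∀ p v, A p v = (χ p * v.1, 2 * v.2.1 + v.2.2, v.2.1 + v.2.2)) :
    IsDiagonalCocycle A χ (Real.goldenConj + 1) (Real.goldenRatio + 1)
      (1, 0, 0) (0, Real.goldenConj, 1) (0, Real.goldenRatio, 1) := by
  have heig {c : ℝ} (hc : c ^ 2 = c + 1) (p : M) : A p (0, c, 1) = (c + 1) • ((0, c, 1) : V3) := by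
    simp only [hA, Prod.smul_mk, Prod.mk.injEq, smul_eq_mul, mul_zero, mul_one, true_and, and_true]
    linear_combination -hc
  refine ⟨fun p => ?_, heig Real.goldenConj_sq, heig Real.goldenRatio_sq,
    norm_smul_add_smul_goldenConj, fun h => ?_⟩
  · simp only [hA, Prod.smul_mk, smul_eq_mul, mul_zero, add_zero]
  · simp only [Prod.mk_eq_zero, one_ne_zero, and_false] at h

theorem image_fiber_eq {M X : Type*} {F : M ≃ M} {π : M → X} {k : X → X} {y : X}
    (h : Function.Semiconj π F k) (hk : ∀ x, k x = y ↔ x = y) :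
    F '' {p | π p = y} = {p | π p = y} := by
  ext q
  rw [F.image_eq_preimage_symm, Set.mem_preimage, Set.mem_ofPred_eq, Set.mem_ofPred_eq, ← hk,
    ← h.eq, F.apply_symm_apply]

theorem isProbabilityMeasure_dirac_prod_volume (x : UnitAddCircle) :
    IsProbabilityMeasure
      ((Measure.dirac x).prod (volume : Measure (UnitAddCircle × UnitAddCircle))) := by
  have h1 : IsProbabilityMeasure (volume : Measure UnitAddCircle) := ⟨UnitAddCircle.measure_univ⟩
  have h2 : IsProbabilityMeasure (volume : Measure (UnitAddCircle × UnitAddCircle)) :=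
    Measure.prod.instIsProbabilityMeasure _ _
  infer_instance

theorem ae_dirac_prod_fst_ne {X Y : Type*} [MeasurableSpace X] [MeasurableSingletonClass X]
    [MeasurableSpace Y] {x y : X} (h : x ≠ y) (ν : Measure Y) :
    ∀ᵐ p ∂(Measure.dirac x).prod ν, p.1 ≠ y :=
  Measure.quasiMeasurePreserving_fst.ae ((ae_dirac_iff (measurableSet_singleton y).compl).2 h)

theorem ergodic_dirac_prod_volume {X : Type*} [MeasurableSpace X] {k : X → X} {x : X}
    (hk : Measurable k) (hx : k x = x) :
    Ergodic (Prod.map k (catMap UnitAddCircle))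
      ((Measure.dirac x).prod (volume : Measure (UnitAddCircle × UnitAddCircle))) :=
  MeasurePreserving.ergodic_of_ergodic_semiconj (g := Prod.mk x)
    ⟨measurable_prodMk_left, (Measure.dirac_prod _).symm⟩ ergodic_catMap
    (hk.prodMap ergodic_catMap.measurable) fun q => by rw [Prod.map_apply, hx]

end Torus

theorem continuousOn_deriv_Icc {g : ℝ → ℝ} {a b : ℝ} (hab : a < b)
    (hg : ContDiffOn ℝ 1 g (Set.Icc a b)) (hd : ∀ x ∈ Set.Icc a b, DifferentiableAt ℝ g x) :
    ContinuousOn (deriv g) (Set.Icc a b) :=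
  (hg.continuousOn_derivWithin (uniqueDiffOn_Icc hab) le_rfl).congr fun x hx =>
    ((hd x hx).derivWithin (uniqueDiffOn_Icc hab x hx)).symm

/-- **Example 2.4**: the (limit-dominated but not dominated) example `f = g × h` on `T³`.
Here `g` is a circle diffeomorphism as in Example 2.4, `h(y,z) = (2y+z, y+z)` is the
hyperbolic torus automorphism, `F = g × h`, `A` is the derivative cocycle of `F`,
`E^s = E₁ ⊕ E₂` and `E^u = E₃`.  Then `E^s ⊕ E^u` is a continuous `DF`-invariant splitting
which is `(1, log(3+√5)^{1/2})`-limit-dominated over `T³ ∖ {1/2}×T²` but has no limit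
domination at the points of `{1/2}×T²`; the maximal `F`-invariant set admitting domination
is `{0}×T²`; and `μ = δ₀ × Leb` is a hyperbolic ergodic measure of `F` with the three
nonzero Lyapunov exponents `-log 2`, `-log((3+√5)/2)` and `log((3+√5)/2)`. -/
theorem example_limit_domination_not_domination
    (g : ℝ → ℝ)
    (hg_mono : StrictMonoOn g (Set.Icc 0 1))
    (hg_diff : ContDiffOn ℝ 1 g (Set.Icc 0 1))
    (hg0 : g 0 = 0) (hg1 : g 1 = 1) (hghalf : g (1/2) = 1/2)
    (hg'0 : deriv g 0 = 1/2) (hg'1 : deriv g 1 = 1/2)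
    (hg'half : deriv g (1/2) = (3 + Real.sqrt 5)/2)
    (hg'pos : ∀ x ∈ Set.Icc (0:ℝ) 1, 0 < deriv g x)
    (hlt : ∀ x ∈ Set.Ioo (0:ℝ) (1/2), g x < x)
    (hgt : ∀ x ∈ Set.Ioo ((1:ℝ)/2) 1, x < g x)
    -- `F = g × h : T³ → T³`
    (F : Torus3 ≃ Torus3)
    (hF : ∀ p : Torus3, F p = (gbar g p.1, 2 • p.2.1 + p.2.2, p.2.1 + p.2.2))
    -- `A` is the derivative cocycle `DF`
    (A : Torus3 → (V3 ≃L[ℝ] V3))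
    (hA : ∀ p : Torus3, ∀ v : V3,
      A p v = (deriv g (liftc p.1) * v.1, 2 * v.2.1 + v.2.2, v.2.1 + v.2.2))
    -- the subbundles `E^s = E₁ ⊕ E₂` and `E^u = E₃`
    (Es Eu : Submodule ℝ V3)
    (hEs : Es = Submodule.span ℝ
      {(((1:ℝ), (0:ℝ), (0:ℝ)) : V3), (((0:ℝ), (1 - Real.sqrt 5)/2, (1:ℝ)) : V3)})
    (hEu : Eu = Submodule.span ℝ {(((0:ℝ), (1 + Real.sqrt 5)/2, (1:ℝ)) : V3)})
    -- `μ = δ₀ × Leb`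
    (μ : Measure Torus3)
    (hμ : μ = (Measure.dirac ((0:UnitAddCircle))).prod
      (volume : Measure (UnitAddCircle × UnitAddCircle))) :
    -- the splitting is `DF`-invariant (being constant, it is continuous)
    (∀ p : Torus3,
      Submodule.map (((A p : V3 →L[ℝ] V3)) : V3 →ₗ[ℝ] V3) Es = Es ∧
      Submodule.map (((A p : V3 →L[ℝ] V3)) : V3 →ₗ[ℝ] V3) Eu = Eu) ∧
    -- complementarity
    IsCompl Es Eu ∧
    -- `(1, log (3+√5)^{1/2})`-limit domination away from `{1/2} × T²`
    LimitDominated F A (fun _ => Es) (fun _ => Eu)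
      {p : Torus3 | p.1 ≠ (((1:ℝ)/2 : ℝ) : UnitAddCircle)} 1
      (Real.log (Real.sqrt (3 + Real.sqrt 5))) ∧
    -- no limit domination at the points of `{1/2} × T²`
    (∀ p : Torus3, p.1 = (((1:ℝ)/2 : ℝ) : UnitAddCircle) → ∀ lam : ℝ, 0 < lam →
      ¬ LimitDominated F A (fun _ => Es) (fun _ => Eu) {p} 1 lam) ∧
    -- `{0} × T²` is invariant and dominated …
    (⇑F '' {p : Torus3 | p.1 = ((0:UnitAddCircle))} = {p : Torus3 | p.1 = ((0:UnitAddCircle))}) ∧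
    (∃ S : ℕ, 0 < S ∧ ∃ lam : ℝ, 0 < lam ∧
      ∀ p : Torus3, p.1 = ((0:UnitAddCircle)) →
        Real.log (opNormOn ((cocN F A S p : V3 →L[ℝ] V3)) Es
          / minNormOn ((cocN F A S p : V3 →L[ℝ] V3)) Eu) ≤ -(2*lam)) ∧
    -- … and it is the maximal such `F`-invariant set
    (∀ Δ : Set Torus3, ⇑F '' Δ = Δ →
      (∃ S : ℕ, 0 < S ∧ ∃ lam : ℝ, 0 < lam ∧
        ∀ p ∈ Δ, Real.log (opNormOn ((cocN F A S p : V3 →L[ℝ] V3)) Es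
          / minNormOn ((cocN F A S p : V3 →L[ℝ] V3)) Eu) ≤ -(2*lam)) →
      Δ ⊆ {p : Torus3 | p.1 = ((0:UnitAddCircle))}) ∧
    -- `μ` is an ergodic invariant probability measure of `F` …
    IsProbabilityMeasure μ ∧ Ergodic ⇑F μ ∧
    -- … which is hyperbolic, with the three nonzero Lyapunov exponents
    (∀ᵐ p ∂μ,
      Filter.Tendsto (fun l : ℕ =>
          Real.log ‖(cocN F A l p) (((1:ℝ), (0:ℝ), (0:ℝ)) : V3)‖ / (l : ℝ))
        Filter.atTop (nhds (-Real.log 2)) ∧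
      Filter.Tendsto (fun l : ℕ =>
          Real.log ‖(cocN F A l p) (((0:ℝ), (1 - Real.sqrt 5)/2, (1:ℝ)) : V3)‖ / (l : ℝ))
        Filter.atTop (nhds (-Real.log ((3 + Real.sqrt 5)/2))) ∧
      Filter.Tendsto (fun l : ℕ =>
          Real.log ‖(cocN F A l p) (((0:ℝ), (1 + Real.sqrt 5)/2, (1:ℝ)) : V3)‖ / (l : ℝ))
        Filter.atTop (nhds (Real.log ((3 + Real.sqrt 5)/2)))) := by
  have hg : IsRepellingAtHalf g :=
    ⟨hg_mono, hg_diff.continuousOn, hg0, hghalf, hg1, hlt, hgt⟩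
  have hχ : ContinuousOn (deriv g) (Set.Icc 0 1) := continuousOn_deriv_Icc one_pos hg_diff
    fun x hx => differentiableAt_of_deriv_ne_zero (hg'pos x hx).ne'
  have hFmap : ⇑F = Prod.map (gbar g) (catMap UnitAddCircle) := funext hF
  have hfst : Function.Semiconj Prod.fst F (gbar g) := fun p => by rw [hFmap, Prod.map_fst]
  have hD := isDiagonalCocycle_prod_catMap hA
  have hle : |Real.goldenRatio + 1| ≤ |deriv g (1 / 2)| := by rw [hg'half, goldenRatio_add_one]
  have hfwd (p : Torus3) := hg.tendsto_iterate_of_ne_half (x := p) hfst hχ hg'0 hg'1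
  subst hEs hEu hμ
  refine ⟨fun p => ⟨hD.map_span_pair p, hD.map_span_singleton p⟩,
    isCompl_span_pair_span_singleton (Real.goldenConj_neg.trans Real.goldenRatio_pos).ne,
    fun p hp => (hD.limitDominated_singleton_iff one_pos (hfwd p hp)).2 ?_ p rfl,
    fun p hp lam hlam => hD.not_limitDominated_singleton one_pos
      (hg.tendsto_iterate_of_eq_half hfst hp) hle hlam,
    image_fiber_eq hfst fun _ => hg.gbar_eq_zero_iff,
    ⟨1, one_pos, _, log_sqrt_three_add_sqrt_five_pos, hD.dominated_one fun p hp => ?_⟩,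
    fun Δ hΔ ⟨S, _, lam, hlam, hdom⟩ p hp => by_contra fun hne => hD.not_dominated hΔ hp
      (hg.tendsto_symm_iterate_of_ne_zero hfst hχ hne) hle hlam hdom,
    isProbabilityMeasure_dirac_prod_volume 0,
    hFmap ▸ ergodic_dirac_prod_volume (measurable_gbar hg.continuousOn)
      (hg.gbar_eq_zero_iff.2 rfl), ?_⟩
  · rw [Nat.cast_one, one_mul, log_max_half_div_goldenRatio_add_one]
  · rw [hp, liftc_zero, hg'0, log_max_half_div_goldenRatio_add_one]
  · filter_upwards [ae_dirac_prod_fst_ne zero_ne_coe_half volume] with p hp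
    simpa only [one_div, Real.log_inv, log_goldenConj_add_one, goldenRatio_add_one] using
      hD.tendsto_log_norm_cocN_div one_half_pos.ne' (hfwd p hp)

end
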